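/- For the harmonic potentials ψ(y) = α·y² and P(y) = β·y² with external forces (h_i) ∈ ℓ¹, the thermodynamic limit of the defect-formation free energy exists and is given explicitly by G_∞(A) = lim_{N→∞} G_N(A) = (1/2)·log((α+β)/α) + α·β·A²/(α+β) + α·A·h₁/(α+β) − h₁²/(4·(α+β)) + A·H − (1/(4α))·H̄, where H = ∑_{i=2}^∞ h_i and H̄ = ∑_{i=2}^∞ h_i². -/

import Mathlib

/-!
Since `u₀ = 0`, the defect `β u₁²` only stiffens the first bond. The partition function of a chain
is obtained from that of the chain with one bond less by convolution with the Boltzmann weight of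
the last bond, so for quadratic bonds it is an iterated convolution of Gaussians: the compliances
`1 / aᵢ` and the equilibrium lengths `-hᵢ / (2 aᵢ)` of the bonds add up. The recursion is run on
lower Lebesgue integrals, where Tonelli's theorem needs no integrability.

If `r` is the harmonic mean of the `N` stiffnesses and `L` the total equilibrium length, the
stretching energy of the chain is `r (N A - L)² / N`, while the defect-free chain has energy
`α N A²`. With a single stiffened bond, `N (r - α) = r β / (α + β)` exactly, so the divergent terms
cancel, and `r → α`.
-/

noncomputable section

open MeasureTheory Real Filter

/-- Extend interior degrees of freedom `u : ℝ^(n-1)` to the whole chain via the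
boundary conditions `u 0 = 0` and `u n = b`. -/
def bc (n : ℕ) (b : ℝ) (u : Fin (n - 1) → ℝ) : ℕ → ℝ := fun i =>
  if h : 0 < i ∧ i < n then u ⟨i - 1, by omega⟩ else if i = 0 then 0 else b

/-- The chain energy `∑_{i=1}^n φ_i (u_i - u_{i-1})` with boundary conditions
`u 0 = 0`, `u n = b`. -/
def chainE (φ : ℕ → ℝ → ℝ) (n : ℕ) (b : ℝ) (u : Fin (n - 1) → ℝ) : ℝ :=
  ∑ i ∈ Finset.range n, φ (i + 1) (bc n b u (i + 1) - bc n b u i)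

/-- The free energy `-log ∫_{ℝ^{N-1}} exp(-∑ φ_i(u_i-u_{i-1}) - defect(u₁)) du`. -/
def freeEnergy (φ : ℕ → ℝ → ℝ) (defect : ℝ → ℝ) (N : ℕ) (A : ℝ) : ℝ :=
  - Real.log (∫ u : Fin (N - 1) → ℝ,
      Real.exp (-(chainE φ N (N * A) u) - defect (bc N (N * A) u 1)))

open scoped ENNReal

section Chain

variable {φ : ℕ → ℝ → ℝ}

lemma bc_zero (n : ℕ) (b : ℝ) (u : Fin (n - 1) → ℝ) : bc n b u 0 = 0 := by
  simp [bc]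

lemma bc_succ_self (m : ℕ) (b : ℝ) (u : Fin m → ℝ) : bc (m + 1) b u (m + 1) = b := by
  simp [bc]

/-- The partition function `∫_{ℝ^{n-1}} exp(-∑ φ_i(u_i-u_{i-1})) du` of the chain of `n` bonds with
right end point `b`, as a lower Lebesgue integral. -/
def partitionFunction (φ : ℕ → ℝ → ℝ) (n : ℕ) (b : ℝ) : ℝ≥0∞ :=
  ∫⁻ u : Fin (n - 1) → ℝ, ENNReal.ofReal (exp (-chainE φ n b u))

lemma bc_snoc (m : ℕ) (b x : ℝ) (u : Fin m → ℝ) {i : ℕ} (hi : i ≤ m + 1) :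
    bc (m + 2) b (Fin.snoc (α := fun _ => ℝ) u x : Fin (m + 1) → ℝ) i = bc (m + 1) x u i := by
  rcases Nat.eq_zero_or_pos i with rfl | hpos
  · rw [bc_zero, bc_zero]
  · rcases hi.eq_or_lt with rfl | hlt
    · simp [bc, Fin.snoc]
    · have hlt' : i - 1 < m := by omega
      simp [bc, Fin.snoc, hpos, hlt, hlt', hlt.trans (Nat.lt_succ_self _)]

lemma chainE_snoc (φ : ℕ → ℝ → ℝ) (m : ℕ) (b x : ℝ) (u : Fin m → ℝ) :
    chainE φ (m + 2) b (Fin.snoc (α := fun _ => ℝ) u x : Fin (m + 1) → ℝ) =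
      chainE φ (m + 1) x u + φ (m + 2) (b - x) := by
  rw [chainE, Finset.sum_range_succ, bc_snoc _ _ _ _ le_rfl, bc_succ_self, bc_succ_self, chainE]
  congr 1
  refine Finset.sum_congr rfl fun i hi => ?_
  have hi : i < m + 1 := Finset.mem_range.1 hi
  rw [bc_snoc _ _ _ _ hi.le, bc_snoc _ _ _ _ hi]

lemma measurable_bc (n : ℕ) (b : ℝ) (i : ℕ) : Measurable fun u => bc n b u i := by
  unfold bc
  split_ifs <;> fun_prop

lemma measurable_chainE (hφ : ∀ i, Measurable (φ i)) (n : ℕ) (b : ℝ) :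
    Measurable (chainE φ n b) :=
  Finset.measurable_fun_sum _ fun i _ =>
    (hφ (i + 1)).comp ((measurable_bc n b (i + 1)).sub (measurable_bc n b i))

lemma lintegral_fin_succ_eq_lintegral_snoc {E : Type*} [MeasureSpace E]
    [SigmaFinite (volume : Measure E)] {m : ℕ} {f : (Fin (m + 1) → E) → ℝ≥0∞} (hf : Measurable f) :
    ∫⁻ u, f u = ∫⁻ x : E, ∫⁻ u : Fin m → E, f (Fin.snoc (α := fun _ => E) u x) := by
  let e := MeasurableEquiv.piFinSuccAbove (fun _ : Fin (m + 1) => E) (Fin.last m)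
  have he : MeasurePreserving e.symm :=
    (volume_preserving_piFinSuccAbove (fun _ : Fin (m + 1) => E) (Fin.last m)).symm
  have he_snoc (x : E) (u : Fin m → E) : e.symm (x, u) = Fin.snoc (α := fun _ => E) u x :=
    Fin.insertNth_last' x u
  calc ∫⁻ u, f u = ∫⁻ p, f (e.symm p) := (he.lintegral_comp hf).symm
    _ = ∫⁻ x, ∫⁻ u, f (e.symm (x, u)) :=
      lintegral_prod _ (hf.comp e.symm.measurable).aemeasurable
    _ = _ := by simp_rw [he_snoc]

lemma partitionFunction_one (φ : ℕ → ℝ → ℝ) (b : ℝ) :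
    partitionFunction φ 1 b = ENNReal.ofReal (exp (-φ 1 b)) := by
  have hchain (u : Fin (1 - 1) → ℝ) : chainE φ 1 b u = φ 1 b := by
    simp [chainE, bc]
  simp [partitionFunction, hchain, volume_pi]

lemma partitionFunction_succ (hφ : ∀ i, Measurable (φ i)) (m : ℕ) (b : ℝ) :
    partitionFunction φ (m + 2) b =
      ∫⁻ x, partitionFunction φ (m + 1) x * ENNReal.ofReal (exp (-φ (m + 2) (b - x))) := by
  have hmeas : Measurable fun u : Fin (m + 1) → ℝ =>
      ENNReal.ofReal (exp (-chainE φ (m + 2) b u)) :=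
    (measurable_chainE hφ (m + 2) b).neg.exp.ennreal_ofReal
  refine (lintegral_fin_succ_eq_lintegral_snoc hmeas).trans (lintegral_congr fun x => ?_)
  simp_rw [chainE_snoc, neg_add, exp_add, ENNReal.ofReal_mul (exp_pos _).le]
  exact lintegral_mul_const' _ _ ENNReal.ofReal_ne_top

lemma partitionFunction_add_const (φ : ℕ → ℝ → ℝ) (c : ℕ → ℝ) (n : ℕ) (b : ℝ) :
    partitionFunction (fun i y => φ i y + c i) n b =
      partitionFunction φ n b *
        ENNReal.ofReal (exp (-∑ i ∈ Finset.range n, c (i + 1))) := by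
  rw [partitionFunction, partitionFunction, ← lintegral_mul_const' _ _ ENNReal.ofReal_ne_top]
  refine lintegral_congr fun u => ?_
  rw [← ENNReal.ofReal_mul (exp_pos _).le, ← exp_add, ← neg_add, chainE, chainE,
    Finset.sum_add_distrib]

lemma freeEnergy_eq_neg_log_partitionFunction (hφ : ∀ i, Measurable (φ i)) (N : ℕ) (A : ℝ) :
    freeEnergy φ (fun _ => 0) N A = -log (partitionFunction φ N (N * A)).toReal := by
  have hmeas : Measurable fun u => exp (-chainE φ N (N * A) u) :=
    (measurable_chainE hφ N (N * A)).neg.exp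
  simp only [freeEnergy, sub_zero]
  rw [integral_eq_lintegral_of_nonneg_ae (ae_of_all _ fun _ => (exp_pos _).le)
    hmeas.aestronglyMeasurable, partitionFunction]

lemma freeEnergy_eq_freeEnergy_update (φ : ℕ → ℝ → ℝ) (D : ℝ → ℝ) (m : ℕ) (A : ℝ) :
    freeEnergy φ D (m + 1) A =
      freeEnergy (Function.update φ 1 fun y => φ 1 y + D y) (fun _ => 0) (m + 1) A := by
  have hchain (b : ℝ) (u : Fin (m + 1 - 1) → ℝ) :
      chainE (Function.update φ 1 fun y => φ 1 y + D y) (m + 1) b u =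
        chainE φ (m + 1) b u + D (bc (m + 1) b u 1) := by
    have hne (i : ℕ) : i + 1 + 1 ≠ 1 := by omega
    simp only [chainE, Finset.sum_range_succ', bc_zero, zero_add, sub_zero, Function.update_self,
      Function.update_of_ne (hne _), ← add_assoc]
  simp only [freeEnergy, hchain, neg_add, sub_zero, ← sub_eq_add_neg]

end Chain

section GaussianConvolution

lemma lintegral_exp_neg_mul_sub_sq {c : ℝ} (hc : 0 < c) (m : ℝ) :
    ∫⁻ x, ENNReal.ofReal (exp (-c * (x - m) ^ 2)) = ENNReal.ofReal √(π / c) := by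
  rw [← ofReal_integral_eq_lintegral_ofReal ((integrable_exp_neg_mul_sq hc).comp_sub_right m)
    (ae_of_all _ fun _ => (exp_pos _).le),
    integral_sub_right_eq_self (fun x => exp (-c * x ^ 2)), integral_gaussian]

variable {s s' : ℝ}

lemma sub_sq_div_add_sub_sq_div (hs : 0 < s) (hs' : 0 < s') (l l' b x : ℝ) :
    (x - l) ^ 2 / s + (b - x - l') ^ 2 / s' =
      (s + s') / (s * s') * (x - (s' * l + s * (b - l')) / (s + s')) ^ 2 +
        (b - (l + l')) ^ 2 / (s + s') := by
  field_simp
  ring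

lemma lintegral_exp_neg_sq_conv (hs : 0 < s) (hs' : 0 < s') (l l' b : ℝ) :
    ∫⁻ x, ENNReal.ofReal (exp (-((x - l) ^ 2 / s))) *
        ENNReal.ofReal (exp (-((b - x - l') ^ 2 / s'))) =
      ENNReal.ofReal (√(π * (s * s' / (s + s'))) * exp (-((b - (l + l')) ^ 2 / (s + s')))) := by
  simp_rw [← ENNReal.ofReal_mul (exp_pos _).le, ← exp_add, ← neg_add,
    sub_sq_div_add_sub_sq_div hs hs', neg_add, exp_add, ENNReal.ofReal_mul (exp_pos _).le,
    ← neg_mul]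
  rw [lintegral_mul_const' _ _ ENNReal.ofReal_ne_top, lintegral_exp_neg_mul_sub_sq (by positivity),
    ENNReal.ofReal_mul (sqrt_nonneg _), div_div_eq_mul_div, mul_div_assoc]

end GaussianConvolution

lemma partitionFunction_sub_sq_div {s : ℕ → ℝ} (hs : ∀ i, 0 < s i) (l : ℕ → ℝ) (m : ℕ) (b : ℝ) :
    partitionFunction (fun i y => (y - l i) ^ 2 / s i) (m + 1) b =
      ENNReal.ofReal
        (√(π ^ m * ((∏ i ∈ Finset.range (m + 1), s (i + 1)) /
            ∑ i ∈ Finset.range (m + 1), s (i + 1))) *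
          exp (-((b - ∑ i ∈ Finset.range (m + 1), l (i + 1)) ^ 2 /
            ∑ i ∈ Finset.range (m + 1), s (i + 1)))) := by
  induction m generalizing b with
  | zero => simp [partitionFunction_one, (hs 1).ne']
  | succ m ih =>
    rw [partitionFunction_succ fun i => by fun_prop]
    simp_rw [ih]
    rw [Finset.prod_range_succ _ (m + 1), Finset.sum_range_succ _ (m + 1),
      Finset.sum_range_succ _ (m + 1)]
    have hS : 0 < ∑ i ∈ Finset.range (m + 1), s (i + 1) :=
      Finset.sum_pos (fun i _ => hs _) (by simp)
    have hP : 0 < ∏ i ∈ Finset.range (m + 1), s (i + 1) := Finset.prod_pos fun i _ => hs _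
    have hs' : 0 < s (m + 1 + 1) := hs _
    generalize ∑ i ∈ Finset.range (m + 1), s (i + 1) = S at *
    generalize ∏ i ∈ Finset.range (m + 1), s (i + 1) = P at *
    have hsqrt : √(π ^ m * (P / S)) * √(π * (S * s (m + 1 + 1) / (S + s (m + 1 + 1)))) =
        √(π ^ (m + 1) * (P * s (m + 1 + 1) / (S + s (m + 1 + 1)))) := by
      rw [← sqrt_mul (by positivity)]
      congr 1
      field_simp
      rw [pow_succ]
    simp_rw [ENNReal.ofReal_mul (sqrt_nonneg _), mul_assoc]
    rw [lintegral_const_mul' _ _ ENNReal.ofReal_ne_top, lintegral_exp_neg_sq_conv hS hs',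
      ← ENNReal.ofReal_mul (sqrt_nonneg _), ← ENNReal.ofReal_mul (sqrt_nonneg _), ← mul_assoc,
      hsqrt]

section QuadraticChain

/-- The harmonic mean of the stiffnesses `a 1, …, a n`: `n` springs in series behave like `n` equal
springs of this stiffness. -/
def effectiveStiffness (a : ℕ → ℝ) (n : ℕ) : ℝ :=
  n / ∑ i ∈ Finset.range n, (a (i + 1))⁻¹

/-- The length at which a chain of `n` bonds with energies `a i * y ^ 2 + h i * y` has minimal
energy; the `i`-th bond contributes `-h i / (2 * a i)`. -/
def equilibriumLength (a h : ℕ → ℝ) (n : ℕ) : ℝ :=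
  ∑ i ∈ Finset.range n, -h (i + 1) / (2 * a (i + 1))

/-- The minimal energy of a chain of `n` bonds with energies `a i * y ^ 2 + h i * y`, with the sign
reversed. -/
def relaxationEnergy (a h : ℕ → ℝ) (n : ℕ) : ℝ :=
  ∑ i ∈ Finset.range n, h (i + 1) ^ 2 / (4 * a (i + 1))

variable {a : ℕ → ℝ}

lemma effectiveStiffness_pos (ha : ∀ i, 0 < a i) (m : ℕ) : 0 < effectiveStiffness a (m + 1) :=
  div_pos (by positivity) (Finset.sum_pos (fun i _ => inv_pos.2 (ha _)) (by simp))

lemma effectiveStiffness_const (α : ℝ) (m : ℕ) : effectiveStiffness (fun _ => α) (m + 1) = α := by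
  have hm : ((m + 1 : ℕ) : ℝ) ≠ 0 := by positivity
  rw [effectiveStiffness, Finset.sum_const, Finset.card_range, nsmul_eq_mul, ← div_div,
    div_self hm, one_div, inv_inv]

lemma sum_inv_eq_div_effectiveStiffness (a : ℕ → ℝ) (m : ℕ) :
    ∑ i ∈ Finset.range (m + 1), (a (i + 1))⁻¹ = (m + 1) / effectiveStiffness a (m + 1) := by
  have hm : (m + 1 : ℝ) ≠ 0 := by positivity
  rw [effectiveStiffness, Nat.cast_add_one, div_div_cancel₀ hm]

lemma partitionFunction_quadratic (ha : ∀ i, 0 < a i) (h : ℕ → ℝ) (m : ℕ) (b : ℝ) :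
    partitionFunction (fun i y => a i * y ^ 2 + h i * y) (m + 1) b =
      ENNReal.ofReal
        (√(π ^ m * effectiveStiffness a (m + 1) /
            ((m + 1) * ∏ i ∈ Finset.range (m + 1), a (i + 1))) *
          exp (-(effectiveStiffness a (m + 1) * (b - equilibriumLength a h (m + 1)) ^ 2 /
            (m + 1))) *
          exp (relaxationEnergy a h (m + 1))) := by
  have hsq : (fun i y => a i * y ^ 2 + h i * y) =
      fun i y => (y - -h i / (2 * a i)) ^ 2 / (a i)⁻¹ + -(h i ^ 2 / (4 * a i)) := by
    funext i y
    have hai : a i ≠ 0 := (ha i).ne'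
    field_simp
    ring
  rw [hsq, partitionFunction_add_const (fun i y => (y - -h i / (2 * a i)) ^ 2 / (a i)⁻¹),
    partitionFunction_sub_sq_div (fun i => inv_pos.2 (ha i)), Finset.prod_inv_distrib,
    sum_inv_eq_div_effectiveStiffness, Finset.sum_neg_distrib, neg_neg,
    ← ENNReal.ofReal_mul (by positivity), ← equilibriumLength, ← relaxationEnergy,
    div_div_eq_mul_div, div_div_eq_mul_div, mul_comm (_ ^ 2)]
  congr 4
  field_simp

lemma freeEnergy_quadratic (ha : ∀ i, 0 < a i) (h : ℕ → ℝ) (m : ℕ) (A : ℝ) :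
    freeEnergy (fun i y => a i * y ^ 2 + h i * y) (fun _ => 0) (m + 1) A =
      -(1 / 2) * log (π ^ m * effectiveStiffness a (m + 1) /
          ((m + 1) * ∏ i ∈ Finset.range (m + 1), a (i + 1))) +
        effectiveStiffness a (m + 1) * ((m + 1) * A - equilibriumLength a h (m + 1)) ^ 2 /
          (m + 1) -
        relaxationEnergy a h (m + 1) := by
  have hr : 0 < effectiveStiffness a (m + 1) := effectiveStiffness_pos ha m
  have hP : 0 < ∏ i ∈ Finset.range (m + 1), a (i + 1) := Finset.prod_pos fun i _ => ha _
  rw [freeEnergy_eq_neg_log_partitionFunction fun i => by fun_prop, partitionFunction_quadratic ha,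
    ENNReal.toReal_ofReal (by positivity), log_mul (by positivity) (exp_ne_zero _),
    log_mul (by positivity) (exp_ne_zero _), log_exp, log_exp, log_sqrt (by positivity),
    Nat.cast_add_one]
  ring

lemma freeEnergy_sq {α : ℝ} (hα : 0 < α) (m : ℕ) (A : ℝ) :
    freeEnergy (fun _ y => α * y ^ 2) (fun _ => 0) (m + 1) A =
      -(1 / 2) * log (π ^ m * α / ((m + 1) * α ^ (m + 1))) + α * (m + 1) * A ^ 2 := by
  have hquad := freeEnergy_quadratic (fun _ => hα) (fun _ => 0) m A
  simp only [zero_mul, add_zero, effectiveStiffness_const, equilibriumLength, relaxationEnergy,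
    neg_zero, zero_div, Finset.sum_const_zero, sub_zero, Finset.prod_const, Finset.card_range,
    ne_eq, OfNat.ofNat_ne_zero, not_false_eq_true, zero_pow] at hquad
  rw [hquad]
  field_simp

end QuadraticChain

section StiffenedBond

/-- The stiffnesses of a chain of bonds of stiffness `α` whose first bond carries the additional
stiffness `β` of the defect. -/
def defectStiffness (α β : ℝ) : ℕ → ℝ :=
  Function.update (fun _ => α) 1 (α + β)

variable {α β : ℝ}

lemma defectStiffness_one (α β : ℝ) : defectStiffness α β 1 = α + β :=
  Function.update_self ..

lemma defectStiffness_add_two (α β : ℝ) (i : ℕ) : defectStiffness α β (i + 2) = α :=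
  Function.update_of_ne (by omega) ..

lemma defectStiffness_pos (hα : 0 < α) (hαβ : 0 < α + β) (i : ℕ) : 0 < defectStiffness α β i := by
  rw [defectStiffness, Function.update_apply]
  split_ifs <;> assumption

lemma freeEnergy_quadratic_defect (α β : ℝ) (h : ℕ → ℝ) (m : ℕ) (A : ℝ) :
    freeEnergy (fun i y => α * y ^ 2 + h i * y) (fun y => β * y ^ 2) (m + 1) A =
      freeEnergy (fun i y => defectStiffness α β i * y ^ 2 + h i * y) (fun _ => 0) (m + 1) A := by
  rw [freeEnergy_eq_freeEnergy_update]
  congr 1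
  funext i y
  rcases eq_or_ne i 1 with rfl | hi
  · rw [Function.update_self, defectStiffness_one]
    ring
  · rw [Function.update_of_ne hi, defectStiffness, Function.update_of_ne hi]

lemma effectiveStiffness_defectStiffness (α β : ℝ) (m : ℕ) :
    effectiveStiffness (defectStiffness α β) (m + 1) = (m + 1) / (α⁻¹ * m + (α + β)⁻¹) := by
  simp only [effectiveStiffness, Finset.sum_range_succ', zero_add, defectStiffness_one, add_assoc,
    Nat.reduceAdd, defectStiffness_add_two, Finset.sum_const, Finset.card_range, nsmul_eq_mul,
    Nat.cast_add, Nat.cast_one]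
  ring

lemma prod_defectStiffness (α β : ℝ) (m : ℕ) :
    ∏ i ∈ Finset.range (m + 1), defectStiffness α β (i + 1) = α ^ m * (α + β) := by
  simp only [Finset.prod_range_succ', zero_add, defectStiffness_one, add_assoc, Nat.reduceAdd,
    defectStiffness_add_two, Finset.prod_const, Finset.card_range]

lemma equilibriumLength_defectStiffness (α β : ℝ) (h : ℕ → ℝ) (m : ℕ) :
    equilibriumLength (defectStiffness α β) h (m + 1) =
      -((∑ i ∈ Finset.range m, h (i + 2)) / (2 * α) + h 1 / (2 * (α + β))) := by
  simp only [equilibriumLength, Finset.sum_range_succ', zero_add, defectStiffness_one, add_assoc,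
    Nat.reduceAdd, defectStiffness_add_two, ← Finset.sum_div, Finset.sum_neg_distrib]
  ring

lemma relaxationEnergy_defectStiffness (α β : ℝ) (h : ℕ → ℝ) (m : ℕ) :
    relaxationEnergy (defectStiffness α β) h (m + 1) =
      (∑ i ∈ Finset.range m, h (i + 2) ^ 2) / (4 * α) + h 1 ^ 2 / (4 * (α + β)) := by
  simp only [relaxationEnergy, Finset.sum_range_succ', zero_add, defectStiffness_one, add_assoc,
    Nat.reduceAdd, defectStiffness_add_two, ← Finset.sum_div]

lemma effectiveStiffness_defectStiffness_sub_mul (hα : 0 < α) (hαβ : 0 < α + β) (m : ℕ) :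
    (effectiveStiffness (defectStiffness α β) (m + 1) - α) * (m + 1) =
      effectiveStiffness (defectStiffness α β) (m + 1) * (β / (α + β)) := by
  rw [effectiveStiffness_defectStiffness]
  have hS : α⁻¹ * m + (α + β)⁻¹ ≠ 0 := by positivity
  have hexcess : (m + 1 : ℝ) - α * (α⁻¹ * m + (α + β)⁻¹) = β / (α + β) := by
    field_simp
    ring
  rw [← hexcess, sub_mul, mul_sub, mul_left_comm, div_mul_cancel₀ _ hS]

lemma tendsto_effectiveStiffness_defectStiffness (hα : α ≠ 0) (β : ℝ) :
    Tendsto (fun m : ℕ => effectiveStiffness (defectStiffness α β) (m + 1)) atTop (nhds α) := by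
  simpa only [effectiveStiffness_defectStiffness, one_div, inv_inv, one_mul, add_comm] using
    tendsto_add_mul_div_add_mul_atTop_nhds 1 (α + β)⁻¹ 1 (inv_ne_zero hα)

lemma tendsto_equilibriumLength_defectStiffness (α β : ℝ) {h : ℕ → ℝ} {H : ℝ}
    (hH : Tendsto (fun n => ∑ i ∈ Finset.range n, h (i + 2)) atTop (nhds H)) :
    Tendsto (fun m => equilibriumLength (defectStiffness α β) h (m + 1)) atTop
      (nhds (-(H / (2 * α) + h 1 / (2 * (α + β))))) := by
  simp_rw [equilibriumLength_defectStiffness]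
  exact ((hH.div_const _).add_const _).neg

lemma tendsto_relaxationEnergy_defectStiffness (α β : ℝ) {h : ℕ → ℝ} {H₂ : ℝ}
    (hH₂ : Tendsto (fun n => ∑ i ∈ Finset.range n, h (i + 2) ^ 2) atTop (nhds H₂)) :
    Tendsto (fun m => relaxationEnergy (defectStiffness α β) h (m + 1)) atTop
      (nhds (H₂ / (4 * α) + h 1 ^ 2 / (4 * (α + β)))) := by
  simp_rw [relaxationEnergy_defectStiffness]
  exact (hH₂.div_const _).add_const _

lemma freeEnergy_defect_sub_freeEnergy (hα : 0 < α) (hαβ : 0 < α + β) (h : ℕ → ℝ) (A : ℝ)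
    (m : ℕ) :
    freeEnergy (fun i y => α * y ^ 2 + h i * y) (fun y => β * y ^ 2) (m + 1) A -
        freeEnergy (fun _ y => α * y ^ 2) (fun _ => 0) (m + 1) A =
      1 / 2 * log ((α + β) / effectiveStiffness (defectStiffness α β) (m + 1)) +
        effectiveStiffness (defectStiffness α β) (m + 1) *
          (β / (α + β) * A ^ 2 -
            2 * A * equilibriumLength (defectStiffness α β) h (m + 1) +
            equilibriumLength (defectStiffness α β) h (m + 1) ^ 2 * (1 / (m + 1))) -
        relaxationEnergy (defectStiffness α β) h (m + 1) := by
  rw [freeEnergy_quadratic_defect, freeEnergy_quadratic (defectStiffness_pos hα hαβ),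
    prod_defectStiffness, freeEnergy_sq hα]
  have hr := effectiveStiffness_pos (defectStiffness_pos hα hαβ) m
  have hexcess := effectiveStiffness_defectStiffness_sub_mul hα hαβ m
  generalize effectiveStiffness (defectStiffness α β) (m + 1) = r at *
  generalize equilibriumLength (defectStiffness α β) h (m + 1) = L
  have hlog : log ((α + β) / r) = log (π ^ m * α / ((m + 1) * α ^ (m + 1))) -
      log (π ^ m * r / ((m + 1) * (α ^ m * (α + β)))) := by
    rw [← log_div (by positivity) (by positivity)]
    congr 1
    field_simp
    ring
  have hstretch : r * ((m + 1) * A - L) ^ 2 / (m + 1) - α * (m + 1) * A ^ 2 =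
      r * (β / (α + β) * A ^ 2 - 2 * A * L + L ^ 2 * (1 / (m + 1))) := by
    calc r * ((m + 1) * A - L) ^ 2 / (m + 1) - α * (m + 1) * A ^ 2
        = (r - α) * (m + 1) * A ^ 2 + r * (-(2 * A * L) + L ^ 2 * (1 / (m + 1))) := by
          field_simp
          ring
      _ = _ := by
          rw [hexcess]
          ring
  rw [← hstretch, hlog]
  ring

end StiffenedBond

lemma summable_sq_of_summable_norm {ι R : Type*} [NormedRing R] [CompleteSpace R] {f : ι → R}
    (hf : Summable fun i => ‖f i‖) : Summable fun i => f i ^ 2 := by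
  have hdiag : Function.Injective fun i : ι => (i, i) := fun _ _ h => congrArg Prod.fst h
  simpa only [sq] using ((hf.mul_norm hf).comp_injective hdiag).of_norm

theorem harmonic_defect_formation_free_energy_with_forces_general {α β : ℝ} (hα : 0 < α)
    (hαβ : 0 < α + β) {h : ℕ → ℝ} {H H₂ : ℝ}
    (hH : Tendsto (fun n => ∑ i ∈ Finset.range n, h (i + 2)) atTop (nhds H))
    (hH₂ : Tendsto (fun n => ∑ i ∈ Finset.range n, h (i + 2) ^ 2) atTop (nhds H₂)) (A : ℝ) :
    Tendsto
      (fun N : ℕ =>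
        freeEnergy (fun i y => α * y ^ 2 + h i * y) (fun y => β * y ^ 2) N A -
          freeEnergy (fun _ y => α * y ^ 2) (fun _ => 0) N A)
      atTop
      (nhds ((1 / 2 : ℝ) * log ((α + β) / α) + α * β * A ^ 2 / (α + β) +
        α * A * h 1 / (α + β) - h 1 ^ 2 / (4 * (α + β)) + A * H - (1 / (4 * α)) * H₂)) := by
  rw [← tendsto_add_atTop_iff_nat 1]
  simp_rw [freeEnergy_defect_sub_freeEnergy hα hαβ]
  have hr := tendsto_effectiveStiffness_defectStiffness hα.ne' β
  have hL := tendsto_equilibriumLength_defectStiffness α β hH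
  have hlog : Tendsto (fun m : ℕ =>
      log ((α + β) / effectiveStiffness (defectStiffness α β) (m + 1))) atTop
      (nhds (log ((α + β) / α))) :=
    (tendsto_const_nhds.div hr hα.ne').log (div_pos hαβ hα).ne'
  have hstretch := hr.mul (((hL.const_mul (2 * A)).const_sub (β / (α + β) * A ^ 2)).add
    ((hL.pow 2).mul tendsto_one_div_add_atTop_nhds_zero_nat))
  convert ((hlog.const_mul (1 / 2)).add hstretch).sub
    (tendsto_relaxationEnergy_defectStiffness α β hH₂) using 2
  field_simp
  ring

/-- thermodynamic limit of the defect-formation free energy for harmonic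
potentials `ψ(y) = α y²`, `P(y) = β y²` with external forces `h ∈ ℓ¹`. -/
theorem harmonic_defect_formation_free_energy_with_forces
    (α β : ℝ) (hα : 0 < α) (hβ : 0 < β)
    (h : ℕ → ℝ) (hh : Summable fun i => |h i|) (A : ℝ) :
    Tendsto
      (fun N : ℕ =>
        freeEnergy (fun i y => α * y ^ 2 + h i * y) (fun y => β * y ^ 2) N A -
          freeEnergy (fun _ y => α * y ^ 2) (fun _ => 0) N A)
      atTop
      (nhds ((1 / 2 : ℝ) * Real.log ((α + β) / α) + α * β * A ^ 2 / (α + β) +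
        α * A * h 1 / (α + β) - h 1 ^ 2 / (4 * (α + β)) +
        A * (∑' i : ℕ, h (i + 2)) - (1 / (4 * α)) * (∑' i : ℕ, (h (i + 2)) ^ 2))) := by
  have hsq : Summable fun i => h i ^ 2 := summable_sq_of_summable_norm hh
  exact harmonic_defect_formation_free_energy_with_forces_general hα (add_pos hα hβ)
    ((summable_nat_add_iff 2).2 hh.of_abs).hasSum.tendsto_sum_nat
    ((summable_nat_add_iff 2).2 hsq).hasSum.tendsto_sum_nat A
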